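/- Let M be a finite matroid of rank r on ground set E. For all commuting variables x, y, λ, ξ (equivalently, for all elements of any commutative ring), SC(M; x·y, λ·ξ) = ∑_{T ⊆ E} λ^{r − rk(T)} · (−y)^{|T|} · SC(M|T; −x, λ) · SC(M/T; y, ξ). -/

import Mathlib

open Finset

/-- A finite matroid on ground set `E`, given by its rank function on finsets,
satisfying the standard rank axioms: the rank of a set is at most its cardinality,
rank is monotone, and rank is submodular. -/
structure FinMatroid (α : Type*) [DecidableEq α] where
  E : Finset α
  rk : Finset α → ℕ
  rk_le_card : ∀ A ⊆ E, rk A ≤ A.card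
  rk_mono : ∀ ⦃A B : Finset α⦄, A ⊆ B → B ⊆ E → rk A ≤ rk B
  rk_submod : ∀ ⦃A B : Finset α⦄, A ⊆ E → B ⊆ E →
    rk (A ∪ B) + rk (A ∩ B) ≤ rk A + rk B

/-- The (bivariate) size-corank polynomial of the matroid-like data given by
ground set `G`, rank function `f`, and normalizing rank `s`:
`SC = ∑_{A ⊆ G} x ^ |A| * l ^ (s - f A)`. -/
def SCsize {α R : Type*} [DecidableEq α] [CommRing R] (G : Finset α) (f : Finset α → ℕ)
    (s : ℕ) (x l : R) : R :=
  ∑ A ∈ G.powerset, x ^ A.card * l ^ (s - f A)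

/-- Reindex a sum over an interval of finsets by the powerset of the difference. -/
theorem sum_interval_aux {α R : Type*} [DecidableEq α] [CommRing R]
    (S E : Finset α) (h : S ⊆ E) (f : Finset α → R) :
    ∑ B ∈ (E \ S).powerset, f (B ∪ S) = ∑ C ∈ E.powerset, if S ⊆ C then f C else 0 := by
  rw [← Finset.sum_filter]
  refine Finset.sum_bij' (fun B _ => B ∪ S) (fun C _ => C \ S) ?_ ?_ ?_ ?_ ?_
  · intro B hB
    simp only [mem_powerset, mem_filter] at *
    exact ⟨union_subset (hB.trans sdiff_subset) h, subset_union_right⟩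
  · intro C hC
    simp only [mem_powerset, mem_filter] at *
    exact sdiff_subset_sdiff hC.1 le_rfl
  · intro B hB
    simp only [mem_powerset] at hB
    rw [union_sdiff_right]
    exact sdiff_eq_self_of_disjoint (disjoint_of_subset_left hB sdiff_disjoint)
  · intro C hC
    simp only [mem_filter] at hC
    exact sdiff_union_of_subset hC.2
  · intros
    rfl

theorem sum_sign_interval_aux {α R : Type*} [DecidableEq α] [CommRing R]
    (A C E : Finset α) (hC : C ⊆ E) :
    (∑ T ∈ E.powerset, if A ⊆ T ∧ T ⊆ C then (-1 : R) ^ T.card else 0)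
      = if A = C then (-1) ^ A.card else 0 := by
  by_cases hAC : A ⊆ C
  · have h1 : (∑ T ∈ E.powerset, if A ⊆ T ∧ T ⊆ C then (-1 : R) ^ T.card else 0)
        = ∑ T ∈ C.powerset, if A ⊆ T then (-1 : R) ^ T.card else 0 := by
      rw [← Finset.sum_filter, ← Finset.sum_filter]
      refine Finset.sum_congr ?_ (fun _ _ => rfl)
      ext T
      simp only [mem_filter, mem_powerset]
      exact ⟨fun h => ⟨h.2.2, h.2.1⟩, fun h => ⟨h.1.trans hC, h.2, h.1⟩⟩
    rw [h1, ← sum_interval_aux A C hAC (fun T => (-1 : R) ^ T.card)]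
    have h2 : ∀ B ∈ (C \ A).powerset,
        (-1 : R) ^ (B ∪ A).card = (((-1 : ℤ) ^ B.card : ℤ) : R) * (-1) ^ A.card := by
      intro B hB
      rw [mem_powerset] at hB
      rw [card_union_of_disjoint (disjoint_of_subset_left hB sdiff_disjoint), pow_add]
      push_cast
      rfl
    rw [Finset.sum_congr rfl h2, ← Finset.sum_mul, ← Int.cast_sum,
      Finset.sum_powerset_neg_one_pow_card]
    by_cases hE : A = C
    · simp [hE]
    · have : C \ A ≠ ∅ := fun h => hE (hAC.antisymm (sdiff_eq_empty_iff_subset.mp h))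
      simp [hE, this]
  · rw [if_neg (fun h => hAC h.le)]
    exact Finset.sum_eq_zero fun T _ => if_neg fun h => hAC (h.1.trans h.2)

/-- Identity 2: the convolution-multiplication identity for the size-corank
polynomial.  Here `M|T` is encoded by ground set `T` with the same rank function and
rank `rk T`, and `M/T` by ground set `E \\ T` with rank function
`A ↦ rk (A ∪ T) - rk T` and rank `rk E - rk T`. -/
theorem size_corank_convolution {α R : Type*} [DecidableEq α] [CommRing R]
    (M : FinMatroid α) (x y l ξ : R) :
    SCsize M.E M.rk (M.rk M.E) (x * y) (l * ξ) =
      ∑ T ∈ M.E.powerset,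
        l ^ (M.rk M.E - M.rk T) * (-y) ^ T.card *
          SCsize T M.rk (M.rk T) (-x) l *
          SCsize (M.E \ T) (fun A => M.rk (A ∪ T) - M.rk T) (M.rk M.E - M.rk T) y ξ := by
  have key : ∀ T ∈ M.E.powerset,
      l ^ (M.rk M.E - M.rk T) * (-y) ^ T.card *
          SCsize T M.rk (M.rk T) (-x) l *
          SCsize (M.E \ T) (fun A => M.rk (A ∪ T) - M.rk T) (M.rk M.E - M.rk T) y ξ
      = ∑ A ∈ M.E.powerset, ∑ C ∈ M.E.powerset,
          ((-x) ^ A.card * y ^ C.card * l ^ (M.rk M.E - M.rk A) * ξ ^ (M.rk M.E - M.rk C)) *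
            (if A ⊆ T ∧ T ⊆ C then (-1 : R) ^ T.card else 0) := by
    intro T hT
    rw [mem_powerset] at hT
    have h1 : SCsize (M.E \ T) (fun A => M.rk (A ∪ T) - M.rk T) (M.rk M.E - M.rk T) y ξ
        = ∑ C ∈ M.E.powerset,
          if T ⊆ C then y ^ (C.card - T.card) * ξ ^ (M.rk M.E - M.rk C) else 0 := by
      rw [← sum_interval_aux T M.E hT
        (fun C => y ^ (C.card - T.card) * ξ ^ (M.rk M.E - M.rk C))]
      refine Finset.sum_congr rfl fun B hB => ?_
      rw [mem_powerset] at hB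
      have hd : Disjoint B T := disjoint_of_subset_left hB sdiff_disjoint
      have hr : M.rk T ≤ M.rk (B ∪ T) :=
        M.rk_mono subset_union_right (union_subset (hB.trans sdiff_subset) hT)
      have e1 : (B ∪ T).card - T.card = B.card := by
        rw [card_union_of_disjoint hd]; omega
      have e2 : M.rk M.E - M.rk T - (M.rk (B ∪ T) - M.rk T) = M.rk M.E - M.rk (B ∪ T) := by
        omega
      simp only [e1, e2]
    have h2 : SCsize T M.rk (M.rk T) (-x) l
        = ∑ A ∈ M.E.powerset,
          if A ⊆ T then (-x) ^ A.card * l ^ (M.rk T - M.rk A) else 0 := by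
      rw [← Finset.sum_filter]
      refine Finset.sum_congr ?_ (fun _ _ => rfl)
      ext A
      simp only [mem_filter, mem_powerset]
      exact ⟨fun h => ⟨h.trans hT, h⟩, fun h => h.2⟩
    rw [h1, h2, mul_assoc, Finset.sum_mul_sum, Finset.mul_sum]
    refine Finset.sum_congr rfl fun A hA => ?_
    rw [Finset.mul_sum]
    refine Finset.sum_congr rfl fun C hC => ?_
    by_cases hAT : A ⊆ T
    · by_cases hTC : T ⊆ C
      · rw [if_pos hAT, if_pos hTC, if_pos ⟨hAT, hTC⟩]
        have hr1 := M.rk_mono hAT hT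
        have hr2 := M.rk_mono hT le_rfl
        have e1 : M.rk M.E - M.rk A = (M.rk M.E - M.rk T) + (M.rk T - M.rk A) := by omega
        have e2 : C.card = T.card + (C.card - T.card) := by
          have := card_le_card hTC
          omega
        have e3 : y ^ C.card = y ^ T.card * y ^ (C.card - T.card) := by
          rw [← pow_add, ← e2]
        rw [e1, e3, pow_add, neg_pow y]
        ring
      · simp [hTC]
    · simp [hAT]
  rw [Finset.sum_congr rfl key, Finset.sum_comm]
  unfold SCsize
  refine Finset.sum_congr rfl fun A hA => ?_
  rw [Finset.sum_comm]
  have h3 : ∀ C ∈ M.E.powerset, (∑ T ∈ M.E.powerset,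
      ((-x) ^ A.card * y ^ C.card * l ^ (M.rk M.E - M.rk A) * ξ ^ (M.rk M.E - M.rk C)) *
            (if A ⊆ T ∧ T ⊆ C then (-1 : R) ^ T.card else 0))
      = if A = C then ((-x) ^ A.card * y ^ C.card * l ^ (M.rk M.E - M.rk A) *
          ξ ^ (M.rk M.E - M.rk C)) * (-1) ^ A.card else 0 := by
    intro C hC
    rw [← Finset.mul_sum, sum_sign_interval_aux A C M.E (mem_powerset.mp hC), mul_ite, mul_zero]
  rw [Finset.sum_congr rfl h3, Finset.sum_ite_eq, if_pos hA, neg_pow x, mul_pow, mul_pow]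
  have h4 : (-1 : R) ^ A.card * (-1) ^ A.card = 1 := by
    rw [← mul_pow]; simp
  linear_combination (-(x ^ A.card * y ^ A.card * l ^ (M.rk M.E - M.rk A) *
    ξ ^ (M.rk M.E - M.rk A))) * h4
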